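/- Let φ : M_a × M_b → M_c be a ℂ-bilinear map and p ∈ ℕ. Then φ is (p,p,1)-positive if and only if Σ_{i,j=1}^p φ(x_{i,j}, y_{i,j}) is a positive matrix in M_c for every positive x = [x_{i,j}] ∈ M_p(M_a) and every positive y = [y_{i,j}] ∈ M_p(M_b). -/

import Mathlib

open Matrix Kronecker ComplexOrder

noncomputable section

abbrev Mat (n : ℕ) := Matrix (Fin n) (Fin n) ℂ

def blk {p a : ℕ} (x : Matrix (Fin p × Fin a) (Fin p × Fin a) ℂ) (i j : Fin p) :
    Mat a := Matrix.of fun s t => x (i, s) (j, t)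

def ampl {a b c p q : ℕ} (φ : Mat a →ₗ[ℂ] Mat b →ₗ[ℂ] Mat c)
    (x : Matrix (Fin p × Fin a) (Fin p × Fin a) ℂ)
    (y : Matrix (Fin q × Fin b) (Fin q × Fin b) ℂ) :
    Matrix ((Fin p × Fin q) × Fin c) ((Fin p × Fin q) × Fin c) ℂ :=
  Matrix.of fun u v => φ (blk x u.1.1 v.1.1) (blk y u.1.2 v.1.2) u.2 v.2

def compress {c p q r : ℕ} (α : Matrix (Fin r) (Fin p × Fin q) ℂ)
    (X : Matrix ((Fin p × Fin q) × Fin c) ((Fin p × Fin q) × Fin c) ℂ) :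
    Matrix (Fin r × Fin c) (Fin r × Fin c) ℂ :=
  Matrix.of fun u v => ∑ ik, ∑ jl, α u.1 ik * (starRingEnd ℂ) (α v.1 jl) * X (ik, u.2) (jl, v.2)

def IsPQRPos {a b c : ℕ} (φ : Mat a →ₗ[ℂ] Mat b →ₗ[ℂ] Mat c) (p q r : ℕ) : Prop :=
  ∀ (x : Matrix (Fin p × Fin a) (Fin p × Fin a) ℂ), x.PosSemidef →
  ∀ (y : Matrix (Fin q × Fin b) (Fin q × Fin b) ℂ), y.PosSemidef →
  ∀ (α : Matrix (Fin r) (Fin p × Fin q) ℂ), (compress α (ampl φ x y)).PosSemidef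

/-!
A row `α` with entries indexed by pairs `(i, k)` is the same thing as a `p × q` scalar matrix `A`.
As `φ` is bilinear, the coefficients of `α φ_{p,q}(x, y) α*` can be moved onto `y`:
`∑ (A i k * star (A j l)) • φ (x i j, y k l) = ∑ φ (x i j, y' i j)`, where `y'` is the block
matrix `(A ⊗ 1) y (A ⊗ 1)ᴴ`. This `y'` is positive, and if `A` is a coisometry, which exists as
soon as `p ≤ q`, then every positive `y'` arises in this way.
-/

lemma one_submatrix_mul_conjTranspose {m n R : Type*} [Fintype n] [DecidableEq m] [DecidableEq n]
    [NonAssocSemiring R] [StarRing R] {f : m → n} (hf : Function.Injective f) :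
    (1 : Matrix n n R).submatrix f id * ((1 : Matrix n n R).submatrix f id)ᴴ = 1 := by
  rw [conjTranspose_submatrix, conjTranspose_one,
    ← submatrix_mul _ _ _ id _ Function.bijective_id, Matrix.one_mul, submatrix_one _ hf]

lemma posSemidef_unique_prod_iff {ι n R : Type*} [Unique ι] [Ring R] [PartialOrder R]
    [StarRing R] {X : Matrix (ι × n) (ι × n) R} :
    X.PosSemidef ↔ (X.submatrix (Prod.mk default) (Prod.mk default)).PosSemidef :=
  (posSemidef_submatrix_equiv (Equiv.uniqueProd n ι).symm).symm

section BlockConj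

variable {l m n ι R : Type*} [Fintype n] [Fintype ι] [DecidableEq ι] [CommSemiring R] [StarRing R]

/-- The action of scalar matrices on block matrices by conjugation, `y ↦ (A ⊗ 1) y (A ⊗ 1)ᴴ`.
The matrix `A` may be rectangular, in which case the number of blocks changes. -/
def blockConj (A : Matrix m n R) (y : Matrix (n × ι) (n × ι) R) : Matrix (m × ι) (m × ι) R :=
  (A ⊗ₖ (1 : Matrix ι ι R)) * y * (A ⊗ₖ (1 : Matrix ι ι R))ᴴ

lemma one_blockConj [DecidableEq n] (y : Matrix (n × ι) (n × ι) R) :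
    blockConj (1 : Matrix n n R) y = y := by
  simp [blockConj]

lemma blockConj_blockConj [Fintype m] (A : Matrix l m R) (B : Matrix m n R)
    (y : Matrix (n × ι) (n × ι) R) :
    blockConj A (blockConj B y) = blockConj (A * B) y := by
  have hAB : (A * B) ⊗ₖ (1 : Matrix ι ι R) =
      A ⊗ₖ (1 : Matrix ι ι R) * B ⊗ₖ (1 : Matrix ι ι R) := by
    rw [← mul_kronecker_mul, Matrix.one_mul]
  simp only [blockConj, hAB, conjTranspose_mul, Matrix.mul_assoc]

lemma blockConj_apply (A : Matrix m n R) (y : Matrix (n × ι) (n × ι) R) (i j : m) (s t : ι) :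
    blockConj A y (i, s) (j, t) = ∑ k, ∑ l, A i k * star (A j l) * y (k, s) (l, t) := by
  simp only [blockConj, mul_apply, conjTranspose_apply, kroneckerMap_apply, one_apply,
    Fintype.sum_prod_type, mul_ite, ite_mul, mul_one, mul_zero, zero_mul, apply_ite star,
    star_zero, Finset.sum_ite_eq, Finset.mem_univ, if_true, Finset.sum_mul]
  rw [Finset.sum_comm]
  exact Finset.sum_congr rfl fun k _ ↦ Finset.sum_congr rfl fun l _ ↦ mul_right_comm _ _ _

end BlockConj

lemma posSemidef_blockConj {m n ι R : Type*} [Finite m] [Fintype n] [Fintype ι] [DecidableEq ι]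
    [CommRing R] [PartialOrder R] [StarRing R] (A : Matrix m n R) {y : Matrix (n × ι) (n × ι) R}
    (hy : y.PosSemidef) : (blockConj A y).PosSemidef :=
  hy.mul_mul_conjTranspose_same _

lemma blk_blockConj {p q a : ℕ} (A : Matrix (Fin p) (Fin q) ℂ)
    (y : Matrix (Fin q × Fin a) (Fin q × Fin a) ℂ) (i j : Fin p) :
    blk (blockConj A y) i j = ∑ k, ∑ l, (A i k * star (A j l)) • blk y k l := by
  ext s t
  simp only [blk, of_apply, blockConj_apply, Matrix.sum_apply, Matrix.smul_apply, smul_eq_mul]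

section Bilinear

variable {a b c : ℕ} (φ : Mat a →ₗ[ℂ] Mat b →ₗ[ℂ] Mat c) {p q r : ℕ}

lemma compress_ampl_submatrix (x : Matrix (Fin p × Fin a) (Fin p × Fin a) ℂ)
    (y : Matrix (Fin q × Fin b) (Fin q × Fin b) ℂ) (α : Matrix (Fin r) (Fin p × Fin q) ℂ)
    (u : Fin r) :
    (compress α (ampl φ x y)).submatrix (Prod.mk u) (Prod.mk u) =
      ∑ i, ∑ j, φ (blk x i j) (blk (blockConj (of (Function.curry (α u))) y) i j) := by
  ext s t
  simp only [blk_blockConj, compress, ampl, of_apply, submatrix_apply, Matrix.sum_apply, map_sum,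
    map_smul, Matrix.smul_apply, smul_eq_mul, Fintype.sum_prod_type, Function.curry_apply,
    starRingEnd_apply]
  exact Finset.sum_congr rfl fun i _ ↦ Finset.sum_comm

lemma isPQRPos_one_iff_forall_blockConj :
    IsPQRPos φ p q 1 ↔
      ∀ x : Matrix (Fin p × Fin a) (Fin p × Fin a) ℂ, x.PosSemidef →
      ∀ y : Matrix (Fin q × Fin b) (Fin q × Fin b) ℂ, y.PosSemidef →
      ∀ A : Matrix (Fin p) (Fin q) ℂ,
        (∑ i, ∑ j, φ (blk x i j) (blk (blockConj A y) i j)).PosSemidef := by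
  simp only [IsPQRPos, posSemidef_unique_prod_iff, compress_ampl_submatrix]
  exact forall₄_congr fun x _ y _ ↦
    ⟨fun h A ↦ h (of fun _ ik ↦ A ik.1 ik.2), fun h α ↦ h (of (Function.curry (α default)))⟩

theorem stmt3_general (hpq : p ≤ q) :
    IsPQRPos φ p q 1 ↔
      ∀ x : Matrix (Fin p × Fin a) (Fin p × Fin a) ℂ, x.PosSemidef →
      ∀ y : Matrix (Fin p × Fin b) (Fin p × Fin b) ℂ, y.PosSemidef →
        (∑ i, ∑ j, φ (blk x i j) (blk y i j)).PosSemidef := by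
  rw [isPQRPos_one_iff_forall_blockConj]
  constructor
  · intro h x hx y hy
    obtain ⟨A, hA⟩ : ∃ A : Matrix (Fin p) (Fin q) ℂ, A * Aᴴ = 1 :=
      ⟨_, one_submatrix_mul_conjTranspose (Fin.castLE_injective hpq)⟩
    have hy' : blockConj A (blockConj Aᴴ y) = y := by
      rw [blockConj_blockConj, hA, one_blockConj]
    simpa only [hy'] using h x hx _ (posSemidef_blockConj Aᴴ hy) A
  · intro h x hx y hy A
    exact h x hx _ (posSemidef_blockConj A hy)

end Bilinear

/-- Proposition "1pp" (iii): φ is (p,p,1)-positive iff Σ_{i,j} φ(x_{ij}, y_{ij}) is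
positive for all positive x ∈ M_p(M_a), y ∈ M_p(M_b). -/
theorem stmt3 {a b c : ℕ} (φ : Mat a →ₗ[ℂ] Mat b →ₗ[ℂ] Mat c) (p : ℕ) :
    IsPQRPos φ p p 1 ↔
      ∀ (x : Matrix (Fin p × Fin a) (Fin p × Fin a) ℂ), x.PosSemidef →
      ∀ (y : Matrix (Fin p × Fin b) (Fin p × Fin b) ℂ), y.PosSemidef →
        (∑ i : Fin p, ∑ j : Fin p, φ (blk x i j) (blk y i j)).PosSemidef :=
  stmt3_general φ le_rfl
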